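/- In the formal power series ring ℤ[[y]], (1 − y) · Σ_{n≥0} |Rec_n(G,~)|·yⁿ = Σ_{n≥0} |Rec_n(G,~_s)|·yⁿ; equivalently, for every n ∈ ℕ, |Rec_n(G,~)| = Σ_{m=0}^{n} |Rec_m(G,~_s)|. In particular, the polynomial Pc(G,s;y) := Σ_{n≥0} |Rec_n(G,~_s)|·yⁿ does not depend on the choice of the vertex s. -/

import Mathlib

open Finset Polynomial

namespace SandpileBM

variable {V E : Type} [Fintype V] [DecidableEq V] [Fintype E] [DecidableEq E]

/-- The number of edges from `v` to `w` in the multigraph given by `src`, `tgt`. -/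
def numEdges (src tgt : E → V) (v w : V) : ℕ :=
  (Finset.univ.filter fun e => src e = v ∧ tgt e = w).card

/-- The out-degree of a vertex. -/
def outdeg (src : E → V) (v : V) : ℕ :=
  (Finset.univ.filter fun e => src e = v).card

/-- The in-degree of a vertex. -/
def indeg (tgt : E → V) (v : V) : ℕ :=
  (Finset.univ.filter fun e => tgt e = v).card

/-- The digraph is strongly connected: any vertex is reachable from any other by
a directed path. -/
def StronglyConnected (src tgt : E → V) : Prop :=
  ∀ v w : V, Relation.ReflTransGen (fun a b => ∃ e : E, src e = a ∧ tgt e = b) v w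

/-- Result of firing the vertex `v` on the chip configuration `c` (sinkless model). -/
def fire (src tgt : E → V) (c : V → ℕ) (v : V) : V → ℕ :=
  fun w => c w + numEdges src tgt v w - (if w = v then outdeg src v else 0)

/-- One legal firing move in the sinkless model. -/
def FireStep (src tgt : E → V) (c d : V → ℕ) : Prop :=
  ∃ v : V, outdeg src v ≤ c v ∧ d = fire src tgt c v

/-- `Reach c d`: `d` is obtained from `c` by a finite sequence of legal firing moves. -/
def Reach (src tgt : E → V) : (V → ℕ) → (V → ℕ) → Prop :=
  Relation.ReflTransGen (FireStep src tgt)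

/-- Stability of a chip configuration. -/
def Stable (src : E → V) (c : V → ℕ) : Prop :=
  ∀ v : V, c v < outdeg src v

/-- A chip configuration is recurrent if it is not stable and every configuration
accessible from it can reach it back. -/
def Recurrent (src tgt : E → V) (c : V → ℕ) : Prop :=
  ¬ Stable src c ∧ ∀ d : V → ℕ, Reach src tgt c d → Reach src tgt d c

/-- Level (total number of chips) of a chip configuration. -/
def lvl (c : V → ℕ) : ℕ := ∑ v : V, c v

/-- Indicator function of the vertex `s`. -/
def deltaS (s : V) : V → ℕ := fun v => if v = s then 1 else 0

/-- Result of firing the vertex `v` on an `s`-configuration. -/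
def sfire (src tgt : E → V) (s : V) (c : {v : V // v ≠ s} → ℕ) (v : {v : V // v ≠ s}) :
    {v : V // v ≠ s} → ℕ :=
  fun w => c w + numEdges src tgt v.1 w.1 - (if w = v then outdeg src v.1 else 0)

/-- One legal s-firing move. -/
def SFireStep (src tgt : E → V) (s : V) (c d : {v : V // v ≠ s} → ℕ) : Prop :=
  ∃ v : {v : V // v ≠ s}, outdeg src v.1 ≤ c v ∧ d = sfire src tgt s c v

/-- `SReach c d`: `d` is obtained from `c` by a finite sequence of legal s-firing moves. -/
def SReach (src tgt : E → V) (s : V) :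
    ({v : V // v ≠ s} → ℕ) → ({v : V // v ≠ s} → ℕ) → Prop :=
  Relation.ReflTransGen (SFireStep src tgt s)

/-- Stability of an `s`-configuration. -/
def SStable (src : E → V) (s : V) (c : {v : V // v ≠ s} → ℕ) : Prop :=
  ∀ v : {v : V // v ≠ s}, c v < outdeg src v.1

/-- The stabilization `c°` of an `s`-configuration: the (for strongly connected digraphs,
unique) stable `s`-configuration reachable from `c` by legal s-firing moves. -/
noncomputable def stab (src tgt : E → V) (s : V) (c : {v : V // v ≠ s} → ℕ) :
    {v : V // v ≠ s} → ℕ :=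
  Classical.epsilon fun d => SReach src tgt s c d ∧ SStable src s d

/-- An `s`-configuration `c` is s-recurrent if every `s`-configuration can be completed
to one whose stabilization is `c`. -/
def SRecurrent (src tgt : E → V) (s : V) (c : {v : V // v ≠ s} → ℕ) : Prop :=
  ∀ c₁ : {v : V // v ≠ s} → ℕ, ∃ c₂ : {v : V // v ≠ s} → ℕ,
    stab src tgt s (c₁ + c₂) = c

/-- `β_s`, recording the number of edges from `s` to each other vertex. -/
def betaS (src tgt : E → V) (s : V) : {v : V // v ≠ s} → ℕ :=
  fun v => numEdges src tgt s v.1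

/-- The relation `~_s` on s-recurrent configurations: `d = (c + k·β_s)°` for some `k`. -/
def SEquiv (src tgt : E → V) (s : V) (c d : {v : V // v ≠ s} → ℕ) : Prop :=
  ∃ k : ℕ, stab src tgt s (c + k • betaS src tgt s) = d

/-- Restriction of a chip configuration to `V ∖ {s}`. -/
def restrictS (s : V) (c : V → ℕ) : {v : V // v ≠ s} → ℕ := fun v => c v.1

/-- Extension `c̄` of an `s`-configuration by `0` at `s`. -/
def extendS (s : V) (c : {v : V // v ≠ s} → ℕ) : V → ℕ :=
  fun v => if h : v = s then 0 else c ⟨v, h⟩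

/-- The s-index `χ(c)`: the least `k` such that `c̄ + k·δ_s` is recurrent. -/
noncomputable def sIndex (src tgt : E → V) (s : V) (c : {v : V // v ≠ s} → ℕ) : ℕ :=
  sInf {k : ℕ | Recurrent src tgt (extendS s c + k • deltaS s)}

/-- `φ(c) := c̄ + χ(c)·δ_s`. -/
noncomputable def phi (src tgt : E → V) (s : V) (c : {v : V // v ≠ s} → ℕ) : V → ℕ :=
  extendS s c + sIndex src tgt s c • deltaS s

/-- The s-level `slvl(c) := χ(c) + Σ_{v ≠ s} c(v)`. -/
noncomputable def slvl (src tgt : E → V) (s : V) (c : {v : V // v ≠ s} → ℕ) : ℕ :=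
  sIndex src tgt s c + ∑ v : {v : V // v ≠ s}, c v

/-- The d-level `dlvl(c) := deg⁺(s) + Σ_{v ≠ s} c(v)`. -/
def dlvl (src : E → V) (s : V) (c : {v : V // v ≠ s} → ℕ) : ℕ :=
  outdeg src s + ∑ v : {v : V // v ≠ s}, c v

/-- The set (as a type) of recurrent chip configurations. -/
abbrev RecL (src tgt : E → V) := {c : V → ℕ // Recurrent src tgt c}

/-- The setoid on recurrent configurations generated by the relation `~` (i.e. `⤳`). -/
def recLSetoid (src tgt : E → V) : Setoid (RecL src tgt) :=
  Relation.EqvGen.setoid fun a b => Reach src tgt a.1 b.1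

/-- The set of `~`-classes of recurrent configurations. -/
abbrev RecLQuot (src tgt : E → V) := Quotient (recLSetoid src tgt)

/-- The set (as a type) of s-recurrent configurations. -/
abbrev RecS (src tgt : E → V) (s : V) := {c : {v : V // v ≠ s} → ℕ // SRecurrent src tgt s c}

/-- The setoid on s-recurrent configurations generated by the relation `~_s`. -/
def recSSetoid (src tgt : E → V) (s : V) : Setoid (RecS src tgt s) :=
  Relation.EqvGen.setoid fun a b => SEquiv src tgt s a.1 b.1

/-- The set of `~_s`-classes of s-recurrent configurations. -/
abbrev RecSQuot (src tgt : E → V) (s : V) := Quotient (recSSetoid src tgt s)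

/-- The level of a `~`-class of recurrent configurations (level is constant on classes). -/
noncomputable def lvlClass (src tgt : E → V) (q : RecLQuot src tgt) : ℕ :=
  sSup ((fun c : RecL src tgt => lvl c.1) '' {c | Quotient.mk (recLSetoid src tgt) c = q})

/-- The s-level of a `~_s`-class (s-level is constant on classes). -/
noncomputable def slvlClass (src tgt : E → V) (s : V) (q : RecSQuot src tgt s) : ℕ :=
  sSup ((fun c : RecS src tgt s => slvl src tgt s c.1) ''
    {c | Quotient.mk (recSSetoid src tgt s) c = q})

/-- The d-level of a `~_s`-class: the maximum d-level over the class. -/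
noncomputable def dlvlClass (src tgt : E → V) (s : V) (q : RecSQuot src tgt s) : ℕ :=
  sSup ((fun c : RecS src tgt s => dlvl src s c.1) ''
    {c | Quotient.mk (recSSetoid src tgt s) c = q})

/-- The Biggs–Merino polynomial `B(G,s;y) = Σ_{[c] ∈ Rec(G,s)/~_s} y^{dlvl([c])}`. -/
noncomputable def BM (src tgt : E → V) (s : V) : Polynomial ℤ :=
  ∑ᶠ q : RecSQuot src tgt s, X ^ dlvlClass src tgt s q

/-- `LegalSeq l c d`: firing the vertices in the list `l` in order is a sequence of
legal firing moves transforming `c` into `d` (sinkless model). -/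
def LegalSeq (src tgt : E → V) : List V → (V → ℕ) → (V → ℕ) → Prop
  | [], c, d => d = c
  | v :: l, c, d => outdeg src v ≤ c v ∧ LegalSeq src tgt l (fire src tgt c v) d

/-- `SLegalSeq l c d`: firing the vertices in the list `l` in order is a sequence of
legal s-firing moves transforming `c` into `d`. -/
def SLegalSeq (src tgt : E → V) (s : V) :
    List {v : V // v ≠ s} → ({v : V // v ≠ s} → ℕ) → ({v : V // v ≠ s} → ℕ) → Prop
  | [], c, d => d = c
  | v :: l, c, d => outdeg src v.1 ≤ c v ∧ SLegalSeq src tgt s l (sfire src tgt s c v) d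

/-- The configuration obtained from `c` after firing the vertices of `l` in order. -/
def iterFire (src tgt : E → V) (c : V → ℕ) (l : List V) : V → ℕ :=
  l.foldl (fire src tgt) c

/-- The Laplacian of the digraph applied to an integer vector:
`(Δq)(v) = deg⁺(v)·q(v) − Σ_w A(w,v)·q(w)`. -/
def lapApply (src tgt : E → V) (q : V → ℤ) : V → ℤ :=
  fun v => (outdeg src v : ℤ) * q v - ∑ w : V, (numEdges src tgt w v : ℤ) * q w

/-- `r` is the primitive period vector of the digraph: it has positive entries with
gcd `1`, lies in the kernel of the Laplacian, and generates this kernel. -/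
def IsPeriodVector (src tgt : E → V) (r : V → ℕ) : Prop :=
  (∀ v : V, 0 < r v) ∧ Finset.univ.gcd r = 1 ∧
    lapApply src tgt (fun v => (r v : ℤ)) = 0 ∧
    ∀ q : V → ℤ, lapApply src tgt q = 0 → ∃ k : ℤ, q = k • fun v => (r v : ℤ)

/-- The Laplacian matrix of the digraph. -/
def lapMatrix (src tgt : E → V) : Matrix V V ℤ :=
  Matrix.of fun v w =>
    if v = w then (outdeg src v : ℤ) - numEdges src tgt v v
    else -(numEdges src tgt w v : ℤ)

/-- The determinant of the reduced Laplacian obtained by deleting the row and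
column indexed by `v`. -/
def reducedLapDet (src tgt : E → V) (v : V) : ℤ :=
  (((lapMatrix src tgt).submatrix (fun a : {w : V // w ≠ v} => a.1)
    (fun a : {w : V // w ≠ v} => a.1)).det)

/-- The period constant `α := gcd_{v ∈ V} det Δ_v`. -/
def periodConstant (src tgt : E → V) : ℤ :=
  Finset.univ.gcd (reducedLapDet src tgt)

/-- `IsWalk l a b`: the list of edges `l` forms a directed walk from `a` to `b`. -/
def IsWalk (src tgt : E → V) : List E → V → V → Prop
  | [], a, b => a = b
  | e :: l, a, b => src e = a ∧ IsWalk src tgt l (tgt e) b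

/-- `IsPath l a b`: the list of edges `l` forms a directed path from `a` to `b`:
all visited vertices are distinct (except that the final vertex is allowed to
coincide with the starting vertex). -/
def IsPath (src tgt : E → V) (l : List E) (a b : V) : Prop :=
  IsWalk src tgt l a b ∧ (l.map tgt).Nodup ∧ a ∉ (l.map tgt).dropLast

/-- `T` is an arborescence rooted at `s`: for every vertex `v` there is a unique
directed path from `s` to `v` using only edges of `T`. -/
def IsArborescence (src tgt : E → V) (s : V) (T : Finset E) : Prop :=
  ∀ v : V, ∃! l : List E, (∀ e ∈ l, e ∈ T) ∧ IsPath src tgt l s v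

/-- The edge `e ∉ T` is externally active for the arborescence `T` (w.r.t. the linear
order on `E`): where `P₁`, `P₂` are the two edge-disjoint directed paths in `T ∪ {e}`
sharing their starting vertex and ending at `tgt e`, with `e ∈ P₁`, the smallest edge
on `P₁ ++ P₂` lies on `P₁`. -/
def ExtActive [LinearOrder E] (src tgt : E → V) (T : Finset E) (e : E) : Prop :=
  e ∉ T ∧ ∃ (u : V) (p₁ p₂ : List E),
    (∀ f ∈ p₁, f ∈ T ∨ f = e) ∧ (∀ f ∈ p₂, f ∈ T ∨ f = e) ∧
    IsPath src tgt p₁ u (tgt e) ∧ IsPath src tgt p₂ u (tgt e) ∧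
    e ∈ p₁ ∧ (∀ f ∈ p₁, f ∉ p₂) ∧
    ∃ fmin ∈ p₁, ∀ f ∈ p₁ ++ p₂, fmin ≤ f

/-- The external activity `e(T)` of an arborescence `T`. -/
noncomputable def extActivity [LinearOrder E] (src tgt : E → V) (T : Finset E) : ℕ :=
  Nat.card {e : E // ExtActive src tgt T e}

/-- The greedoid Tutte polynomial `T(G,s;y) = Σ_{T ∈ A(G,s)} y^{e(T)}`. -/
noncomputable def greedoidTutte [LinearOrder E] (src tgt : E → V) (s : V) : Polynomial ℤ :=
  ∑ᶠ T : {T : Finset E // IsArborescence src tgt s T}, X ^ extActivity src tgt T.1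

/-- `f` is a `G^r`-parking function rooted at `s`. -/
def IsParking (src tgt : E → V) (s : V) (f : {v : V // v ≠ s} → ℕ) : Prop :=
  ∀ A : Finset {v : V // v ≠ s}, A.Nonempty →
    ∃ v ∈ A, f v < Nat.card {e : E // (∀ w ∈ A, src e ≠ w.1) ∧ tgt e = v.1}

/-- The d-level of a `G^r`-parking function: `|E| − |V| + 1 − Σ_{v≠s} f(v)`. -/
noncomputable def parkDlvl (src : E → V) (s : V) (f : {v : V // v ≠ s} → ℕ) : ℕ :=
  ((Fintype.card E : ℤ) - Fintype.card V + 1 - ∑ v : {v : V // v ≠ s}, (f v : ℤ)).toNat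

/-- `σ` is an s-decreasing traversal: a sequence in which every vertex and edge of `G`
appears exactly once, satisfying (R1) every vertex other than `s` is immediately
preceded by an edge targeting it, and (R2) every edge is the `<ₑ`-maximum edge not yet
seen whose source has been seen. -/
def IsTraversal [LinearOrder E] (src tgt : E → V) (s : V) (σ : List (V ⊕ E)) : Prop :=
  σ.Nodup ∧ (∀ x : V ⊕ E, x ∈ σ) ∧
  (∀ (i : ℕ) (hi : i < σ.length) (v : V),
      σ.get ⟨i, hi⟩ = Sum.inl v → v ≠ s →
      0 < i ∧ ∃ e : E, tgt e = v ∧ σ.get ⟨i - 1, by omega⟩ = Sum.inr e) ∧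
  (∀ (i : ℕ) (hi : i < σ.length) (e : E),
      σ.get ⟨i, hi⟩ = Sum.inr e →
      Sum.inl (src e) ∈ σ.take i ∧
      ∀ f : E, Sum.inr f ∉ σ.take i → Sum.inl (src f) ∈ σ.take i → f ≤ e)

open scoped Classical in
/-- `Υ(σ)`: the set of edges immediately preceding a non-sink vertex in `σ`. -/
noncomputable def Upsilon (src tgt : E → V) (s : V) (σ : List (V ⊕ E)) : Finset E :=
  Finset.univ.filter fun e =>
    ∃ (i : ℕ) (hi : i < σ.length) (v : V), v ≠ s ∧ σ.get ⟨i, hi⟩ = Sum.inl v ∧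
      0 < i ∧ ∃ hj : i - 1 < σ.length, σ.get ⟨i - 1, hj⟩ = Sum.inr e

/-- The strength of `σ`: the number of strong edges, i.e. edges whose target appears
before them in `σ`. -/
noncomputable def strength (tgt : E → V) (σ : List (V ⊕ E)) : ℕ :=
  Nat.card {e : E // ∃ (i : ℕ) (hi : i < σ.length),
    σ.get ⟨i, hi⟩ = Sum.inr e ∧ Sum.inl (tgt e) ∈ σ.take i}

/-- `Ψ(σ)(v)`: one less than the number of edges targeting `v` that appear before the
vertex `v` in `σ`. -/
def Psi (tgt : E → V) (s : V) (σ : List (V ⊕ E)) : {v : V // v ≠ s} → ℕ :=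
  fun v =>
    (((σ.takeWhile fun x => x ≠ Sum.inl v.1).filterMap Sum.getRight?).filter
      fun e => tgt e = v.1).length - 1

/-- The generating function `Rc(G;y) = Σ_{n≥0} |Rec_n(G,~)|·yⁿ` of the sinkless model. -/
noncomputable def RcSeries (src tgt : E → V) : PowerSeries ℤ :=
  PowerSeries.mk fun n => (Nat.card {q : RecLQuot src tgt // lvlClass src tgt q = n} : ℤ)

/-- The generating function `Pc(G,s;y) = Σ_{n≥0} |Rec_n(G,~_s)|·yⁿ`. -/
noncomputable def PcSeries (src tgt : E → V) (s : V) : PowerSeries ℤ :=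
  PowerSeries.mk fun n =>
    (Nat.card {q : RecSQuot src tgt s // slvlClass src tgt s q = n} : ℤ)

/-! The chip-firing game is studied through *firing vectors*: a legal firing sequence is remembered
only by how often it fires each vertex. Two legal sequences from the same configuration with
vectors `x` and `y` can be completed, by sequences with vectors `y - x` and `x - y`, to a common
configuration. Hence a configuration is recurrent iff it lies on a nontrivial closed firing
sequence, and strong connectivity forces such a sequence to fire every vertex, so (after
repeating it) any vertex as often as we like.

Firing `s` adds `β_s` to the restriction to `V ∖ {s}` and firing any other vertex is an
`s`-firing move, so sending `c` to the stabilization of its restriction maps `~`-classes to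
`~_s`-classes. A configuration is determined by its restriction and its level, which makes this
map injective on classes of a fixed level `n`; a class `[a]` is hit iff `n` leaves at least `χ(a)`
chips for `s`, i.e. iff `slvl a ≤ n`. Thus `|Rec_n(G,~)|` counts the `~_s`-classes of `s`-level at
most `n`. -/

theorem one_sub_X_mul_mk_sum_range {R : Type*} [Ring R] (a : ℕ → R) :
    (1 - PowerSeries.X) * PowerSeries.mk (fun n => ∑ m ∈ range (n + 1), a m) =
      PowerSeries.mk a := by
  ext n
  rw [sub_mul, one_mul, map_sub]
  cases n with
  | zero => simp
  | succ n => simp [PowerSeries.coeff_succ_X_mul, sum_range_succ _ (n + 1)]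

theorem natCard_subtype_le_eq_sum {α : Type*} [Finite α] (f : α → ℕ) (n : ℕ) :
    Nat.card {a // f a ≤ n} = ∑ m ∈ range (n + 1), Nat.card {a // f a = m} := by
  classical
  cases nonempty_fintype α
  simp only [Nat.card_eq_fintype_card, Fintype.card_subtype]
  rw [card_eq_sum_card_fiberwise (f := f) (t := range (n + 1)) (by intro a; simp)]
  refine sum_congr rfl fun m hm => congrArg card ?_
  rw [mem_range] at hm
  grind

theorem csSup_image_mk_eq {α β : Type*} [ConditionallyCompleteLattice β] (S : Setoid α)
    {f : α → β} (hf : ∀ a b, S a b → f a = f b) (a : α) :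
    sSup (f '' {c | Quotient.mk S c = Quotient.mk S a}) = f a := by
  suffices f '' {c | Quotient.mk S c = Quotient.mk S a} = {f a} by rw [this, csSup_singleton]
  refine Set.eq_singleton_iff_unique_mem.2 ⟨⟨a, rfl, rfl⟩, ?_⟩
  rintro _ ⟨c, hc, rfl⟩
  exact hf c a (Quotient.exact hc)

/-! ### Firing vectors -/

section Firing

omit [Fintype V] [DecidableEq E]

variable {src tgt : E → V} {c d e x y : V → ℕ} {v w : V}

/-- `HasPath src tgt v w`: there is a directed path from `v` to `w`. Written so that
`StronglyConnected` says definitionally that this holds for all `v` and `w`. -/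
abbrev HasPath (src tgt : E → V) : V → V → Prop :=
  Relation.ReflTransGen fun a b => ∃ e : E, src e = a ∧ tgt e = b

/-- `Fires src tgt c x d`: some sequence of legal firing moves leads from `c` to `d` and fires
each vertex `v` exactly `x v` times, i.e. has firing vector `x`. -/
inductive Fires (src tgt : E → V) : (V → ℕ) → (V → ℕ) → (V → ℕ) → Prop
  | refl (c : V → ℕ) : Fires src tgt c 0 c
  | head {c x d : V → ℕ} {v : V} (hv : outdeg src v ≤ c v)
      (h : Fires src tgt (fire src tgt c v) x d) : Fires src tgt c (x + Pi.single v 1) d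

theorem fire_add_single (hv : outdeg src v ≤ c v) :
    fire src tgt c v + Pi.single v (outdeg src v) = c + numEdges src tgt v := by
  funext w
  by_cases hw : w = v
  · subst hw
    simp only [fire, Pi.add_apply, Pi.single_eq_same, if_true]
    omega
  · simp [fire, hw]

theorem fire_apply_of_ne (hw : w ≠ v) : fire src tgt c v w = c w + numEdges src tgt v w := by
  simp [fire, hw]

theorem fire_add (hv : outdeg src v ≤ c v) (e : V → ℕ) :
    fire src tgt (c + e) v = fire src tgt c v + e := by
  have hv' : outdeg src v ≤ (c + e) v := hv.trans le_self_add
  apply add_right_cancel (b := Pi.single v (outdeg src v))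
  rw [fire_add_single hv', add_right_comm, ← fire_add_single hv, add_right_comm]

theorem fire_comm (hvw : v ≠ w) (hv : outdeg src v ≤ c v) (hw : outdeg src w ≤ c w) :
    fire src tgt (fire src tgt c v) w = fire src tgt (fire src tgt c w) v := by
  funext u
  simp only [fire]
  grind

theorem numEdges_pos (h : ∃ e : E, src e = v ∧ tgt e = w) : 0 < numEdges src tgt v w := by
  obtain ⟨e, he⟩ := h
  exact card_pos.2 ⟨e, by simpa using he⟩

namespace Fires

theorem single (hv : outdeg src v ≤ c v) :
    Fires src tgt c (Pi.single v 1) (fire src tgt c v) := by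
  simpa using head hv (refl _)

theorem trans (h : Fires src tgt c x d) (h' : Fires src tgt d y e) :
    Fires src tgt c (x + y) e := by
  induction h with
  | refl c => simpa using h'
  | head hv _ ih => simpa only [add_right_comm] using head hv (ih h')

theorem add_right (h : Fires src tgt c x d) (e : V → ℕ) : Fires src tgt (c + e) x (d + e) := by
  induction h with
  | refl c => exact refl _
  | head hv _ ih => exact head (hv.trans le_self_add) (by rwa [fire_add hv])

theorem add {c' x' d' : V → ℕ} (h : Fires src tgt c x d) (h' : Fires src tgt c' x' d') :
    Fires src tgt (c + c') (x + x') (d + d') := by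
  refine (h.add_right c').trans ?_
  simpa only [add_comm d] using h'.add_right d

theorem smul (h : Fires src tgt c x d) (n : ℕ) : Fires src tgt (n • c) (n • x) (n • d) := by
  induction n with
  | zero => simpa using refl 0
  | succ n ih => simpa only [succ_nsmul] using ih.add h

theorem sum {ι : Type*} {c x d : ι → V → ℕ} (S : Finset ι)
    (h : ∀ i ∈ S, Fires src tgt (c i) (x i) (d i)) :
    Fires src tgt (∑ i ∈ S, c i) (∑ i ∈ S, x i) (∑ i ∈ S, d i) := by
  classical
  induction S using Finset.induction_on with
  | empty => exact refl 0
  | insert i S hi ih =>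
    simp only [sum_insert hi]
    exact (h i (mem_insert_self i S)).add (ih fun j hj => h j (mem_insert_of_mem hj))

theorem iterate (h : Fires src tgt c x c) (n : ℕ) : Fires src tgt c (n • x) c := by
  induction n with
  | zero => simpa using refl c
  | succ n ih => simpa only [succ_nsmul] using ih.trans h

theorem reach (h : Fires src tgt c x d) : Reach src tgt c d := by
  induction h with
  | refl c => exact .refl
  | head hv _ ih => exact .head ⟨_, hv, rfl⟩ ih

theorem eq_of_zero (h : Fires src tgt c 0 d) : d = c := by
  generalize hx : (0 : V → ℕ) = x at h
  cases h with
  | refl => rfl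
  | @head _ _ _ v => simpa using congrFun hx v

theorem exists_le_of_nonzero (h : Fires src tgt c x d) (hx : x ≠ 0) :
    ∃ v, outdeg src v ≤ c v := by
  cases h with
  | refl => exact absurd rfl hx
  | head hv => exact ⟨_, hv⟩

theorem exists_completion_single (h : Fires src tgt c x d) :
    ∀ {v}, outdeg src v ≤ c v → ∃ f, Fires src tgt (fire src tgt c v) (x - Pi.single v 1) f ∧
      Fires src tgt d (Pi.single v 1 - x) f := by
  induction h with
  | refl c => exact fun hv => ⟨_, by simpa using refl _, by simpa using single hv⟩
  | @head c x d u hu hd ih =>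
    intro v hv
    obtain rfl | huv := eq_or_ne u v
    · refine ⟨d, by simpa using hd, ?_⟩
      rw [tsub_eq_zero_of_le le_add_self]
      exact refl d
    have hv' : outdeg src v ≤ fire src tgt c u v := by
      rw [fire_apply_of_ne huv.symm]
      omega
    obtain ⟨f, hf, hdf⟩ := ih hv'
    rw [fire_comm huv hu hv] at hf
    refine ⟨f, ?_, ?_⟩
    · have hx : x + Pi.single u 1 - Pi.single v 1 = x - Pi.single v 1 + Pi.single u 1 := by
        funext w
        simp only [Pi.add_apply, Pi.sub_apply, Pi.single_apply]
        grind
      rw [hx]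
      exact head (by rw [fire_apply_of_ne huv]; omega) hf
    · have hx : (Pi.single v 1 - (x + Pi.single u 1) : V → ℕ) = Pi.single v 1 - x := by
        funext w
        simp only [Pi.add_apply, Pi.sub_apply, Pi.single_apply]
        grind
      rwa [hx]

theorem exists_completion (h : Fires src tgt c y e) :
    ∀ {x d}, Fires src tgt c x d →
      ∃ f, Fires src tgt d (y - x) f ∧ Fires src tgt e (x - y) f := by
  induction h with
  | refl c => exact fun {x d} hd => ⟨d, by simpa using refl d, by simpa using hd⟩
  | @head c y e v hv _ ih =>
    intro x d hd
    obtain ⟨f, hvf, hdf⟩ := hd.exists_completion_single hv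
    obtain ⟨g, hfg, heg⟩ := ih hvf
    have hyx : y + Pi.single v 1 - x = Pi.single v 1 - x + (y - (x - Pi.single v 1)) := by
      funext w
      simp only [Pi.add_apply, Pi.sub_apply]
      omega
    exact ⟨g, hyx ▸ hdf.trans hfg, by rwa [tsub_add_eq_tsub_tsub_swap]⟩

theorem cancel_left (h : Fires src tgt c x d) (h' : Fires src tgt c y e) (hxy : x ≤ y) :
    Fires src tgt d (y - x) e := by
  obtain ⟨f, hdf, hef⟩ := h'.exists_completion h
  rw [tsub_eq_zero_of_le hxy] at hef
  rwa [hef.eq_of_zero] at hdf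

theorem exists_apply_eq (h : Fires src tgt c x d) (v : V) :
    ∀ m ≤ x v, ∃ y e, Fires src tgt c y e ∧ y v = m := by
  induction h with
  | refl c => exact fun m hm => ⟨0, c, refl c, (Nat.le_zero.1 hm).symm⟩
  | @head c x d u hu _ ih =>
    rintro (_ | m) hm
    · exact ⟨0, c, refl c, rfl⟩
    obtain rfl | huv := eq_or_ne v u
    · obtain ⟨y, e, he, rfl⟩ := ih m (by simpa using hm)
      exact ⟨_, e, head hu he, by simp⟩
    · obtain ⟨y, e, he, hy⟩ := ih (m + 1) (by simpa [huv] using hm)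
      exact ⟨_, e, head hu he, by simp [huv, hy]⟩

theorem add_mul_numEdges_le (h : Fires src tgt c x d) (hw : x w = 0) (v : V) :
    c w + x v * numEdges src tgt v w ≤ d w := by
  induction h with
  | refl c => simp
  | @head c x d u hu _ ih =>
    obtain ⟨hxw, huw⟩ : x w = 0 ∧ w ≠ u := by
      simpa [Pi.single_apply] using hw
    have hle := ih hxw
    rw [fire_apply_of_ne huw] at hle
    obtain rfl | hvu := eq_or_ne v u
    · rw [Pi.add_apply, Pi.single_eq_same, add_one_mul]
      omega
    · rw [Pi.add_apply, Pi.single_eq_of_ne hvu, add_zero]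
      omega

theorem pos_of_closed (h : Fires src tgt c x c) (hv : 0 < x v)
    (hvw : HasPath src tgt v w) : 0 < x w := by
  induction hvw with
  | refl => exact hv
  | @tail a b _ hab ih =>
    by_contra hb
    have hle := h.add_mul_numEdges_le (Nat.eq_zero_of_not_pos hb) a
    have hpos := Nat.mul_pos ih (numEdges_pos hab)
    omega

end Fires

theorem Reach.exists_fires (h : Reach src tgt c d) : ∃ x, Fires src tgt c x d := by
  induction h using Relation.ReflTransGen.head_induction_on with
  | refl => exact ⟨0, .refl _⟩
  | head h _ ih =>
    obtain ⟨v, hv, rfl⟩ := h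
    obtain ⟨x, hx⟩ := ih
    exact ⟨_, hx.head hv⟩

end Firing

/-! ### Levels -/

section Level

omit [DecidableEq E]

variable {src tgt : E → V} {c d x : V → ℕ} {v : V}

omit [DecidableEq V] in
theorem lvl_add (c d : V → ℕ) : lvl (c + d) = lvl c + lvl d := sum_add_distrib

theorem lvl_numEdges (src tgt : E → V) (v : V) : lvl (numEdges src tgt v) = outdeg src v := by
  unfold lvl numEdges outdeg
  rw [card_eq_sum_card_fiberwise (f := tgt) (t := univ) (by simp)]
  simp only [filter_filter]

theorem lvl_fire (hv : outdeg src v ≤ c v) : lvl (fire src tgt c v) = lvl c := by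
  have h := congrArg lvl (fire_add_single (tgt := tgt) hv)
  rw [lvl_add, lvl_add, lvl_numEdges, lvl, lvl, sum_pi_single' v] at h
  simpa [lvl] using h

theorem Fires.lvl_eq (h : Fires src tgt c x d) : lvl d = lvl c := by
  induction h with
  | refl c => rfl
  | head hv _ ih => rw [ih, lvl_fire hv]

theorem Reach.lvl_eq (h : Reach src tgt c d) : lvl d = lvl c := by
  obtain ⟨x, hx⟩ := h.exists_fires
  exact hx.lvl_eq

omit [DecidableEq V] in
theorem finite_setOf_lvl_eq (n : ℕ) : {c : V → ℕ | lvl c = n}.Finite := by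
  classical
  exact (univ.piAntidiag n).finite_toSet.subset fun c hc => by simpa [lvl] using hc

end Level

/-! ### Recurrent configurations -/

section Recurrence

omit [Fintype V] [DecidableEq E]

variable {src tgt : E → V} {c d x : V → ℕ}

theorem Fires.exists_closed_ge [Finite V] (hG : StronglyConnected src tgt)
    (h : Fires src tgt c x c) (hx : x ≠ 0) (y : V → ℕ) : ∃ z, y ≤ z ∧ Fires src tgt c z c := by
  cases nonempty_fintype V
  obtain ⟨v, hv⟩ := Function.ne_iff.1 hx
  refine ⟨(∑ w, y w) • x, fun w => ?_, h.iterate _⟩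
  calc y w ≤ ∑ w, y w := single_le_sum (fun _ _ => Nat.zero_le _) (mem_univ w)
    _ ≤ (∑ w, y w) * x w :=
      Nat.le_mul_of_pos_right _ (h.pos_of_closed (Nat.pos_of_ne_zero hv) (hG v w))

theorem recurrent_iff_exists_closed [Finite V] (hG : StronglyConnected src tgt) :
    Recurrent src tgt c ↔ ∃ x ≠ 0, Fires src tgt c x c := by
  constructor
  · rintro ⟨hc, hback⟩
    obtain ⟨v, hv⟩ : ∃ v, outdeg src v ≤ c v := by simpa [Stable] using hc
    obtain ⟨x, hx⟩ := Reach.exists_fires (hback _ (.single ⟨v, hv, rfl⟩))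
    refine ⟨x + Pi.single v 1, fun h0 => ?_, hx.head hv⟩
    simpa using congrFun h0 v
  · rintro ⟨x, hx, h⟩
    refine ⟨fun hc => ?_, fun d hd => ?_⟩
    · obtain ⟨v, hv⟩ := h.exists_le_of_nonzero hx
      exact (hc v).not_ge hv
    · obtain ⟨y, hy⟩ := Reach.exists_fires hd
      obtain ⟨z, hyz, hz⟩ := h.exists_closed_ge hG hx y
      exact (hy.cancel_left hz hyz).reach

theorem Recurrent.exists_closed_ge [Finite V] (hG : StronglyConnected src tgt)
    (hc : Recurrent src tgt c) (y : V → ℕ) : ∃ z, y ≤ z ∧ Fires src tgt c z c := by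
  obtain ⟨x, hx, h⟩ := (recurrent_iff_exists_closed hG).1 hc
  exact h.exists_closed_ge hG hx y

theorem Recurrent.add_right [Finite V] (hG : StronglyConnected src tgt)
    (hc : Recurrent src tgt c) (e : V → ℕ) : Recurrent src tgt (c + e) := by
  rw [recurrent_iff_exists_closed hG] at hc ⊢
  obtain ⟨x, hx, h⟩ := hc
  exact ⟨x, hx, h.add_right e⟩

theorem Recurrent.of_reach (hc : Recurrent src tgt c) (h : Reach src tgt c d) :
    Recurrent src tgt d := by
  refine ⟨fun hd => hc.1 ?_, fun e he => (hc.2 e (h.trans he)).trans h⟩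
  obtain hdc | ⟨_, ⟨v, hv, -⟩, -⟩ := (hc.2 d h).cases_head
  · exact hdc ▸ hd
  · exact absurd hv (hd v).not_ge

theorem reach_equivalence :
    Equivalence fun c d : RecL src tgt => Reach src tgt c.1 d.1 where
  refl _ := .refl
  symm {c _} h := c.2.2 _ h
  trans h h' := Relation.ReflTransGen.trans h h'

theorem recLSetoid_iff {c d : RecL src tgt} :
    recLSetoid src tgt c d ↔ Reach src tgt c.1 d.1 :=
  reach_equivalence.eqvGen_iff

end Recurrence

/-! ### Restriction and extension of configurations -/

section Restriction

omit [Fintype V]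

variable {s : V}

omit [DecidableEq V] in
theorem restrictS_add (c d : V → ℕ) :
    restrictS s (c + d) = restrictS s c + restrictS s d := rfl

omit [DecidableEq V] in
theorem restrictS_smul (k : ℕ) (c : V → ℕ) : restrictS s (k • c) = k • restrictS s c := rfl

theorem restrictS_deltaS : restrictS s (deltaS s) = 0 := by
  funext v
  simp [restrictS, deltaS, v.2]

theorem restrictS_extendS (a : {v : V // v ≠ s} → ℕ) : restrictS s (extendS s a) = a := by
  funext v
  simp [restrictS, extendS, v.2]

theorem restrictS_extendS_add (a : {v : V // v ≠ s} → ℕ) (k : ℕ) :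
    restrictS s (extendS s a + k • deltaS s) = a := by
  rw [restrictS_add, restrictS_smul, restrictS_extendS, restrictS_deltaS, smul_zero, add_zero]

theorem extendS_restrictS_add (c : V → ℕ) :
    extendS s (restrictS s c) + c s • deltaS s = c := by
  funext v
  by_cases hv : v = s <;> simp [extendS, restrictS, deltaS, hv]

variable [Fintype V]

theorem lvl_eq_add_sum_restrictS (s : V) (c : V → ℕ) : lvl c = c s + ∑ v, restrictS s c v :=
  Fintype.sum_eq_add_sum_subtype_ne c s

theorem lvl_extendS_add (a : {v : V // v ≠ s} → ℕ) (k : ℕ) :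
    lvl (extendS s a + k • deltaS s) = k + ∑ v, a v := by
  rw [lvl_eq_add_sum_restrictS s, restrictS_extendS_add]
  simp [extendS, deltaS]

omit [DecidableEq V] in
theorem eq_of_restrictS_eq_of_lvl_eq {c d : V → ℕ} (h : restrictS s c = restrictS s d)
    (hl : lvl c = lvl d) : c = d := by
  classical
  rw [lvl_eq_add_sum_restrictS s, lvl_eq_add_sum_restrictS s, h, Nat.add_right_cancel_iff] at hl
  rw [← extendS_restrictS_add (s := s) c, h, hl, extendS_restrictS_add]

end Restriction

/-! ### Stabilization -/

section Stabilization

omit [Fintype V] [DecidableEq E]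

variable {src tgt : E → V} {s : V} {c d x : V → ℕ} {a b : {v : V // v ≠ s} → ℕ}

theorem restrictS_fire_self (c : V → ℕ) :
    restrictS s (fire src tgt c s) = restrictS s c + betaS src tgt s := by
  funext v
  simp [restrictS, betaS, fire, v.2]

theorem restrictS_fire_coe (c : V → ℕ) (v : {v : V // v ≠ s}) :
    restrictS s (fire src tgt c v) = sfire src tgt s (restrictS s c) v := by
  funext w
  simp [restrictS, sfire, fire, Subtype.ext_iff]

theorem SReach.add_right (h : SReach src tgt s a b) (e : {v : V // v ≠ s} → ℕ) :
    SReach src tgt s (a + e) (b + e) := by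
  refine Relation.ReflTransGen.lift (· + e) ?_ _ _ h
  rintro c _ ⟨v, hv, rfl⟩
  refine ⟨v, hv.trans le_self_add, ?_⟩
  funext w
  simp only [sfire, Pi.add_apply]
  grind

theorem Fires.sreach (h : Fires src tgt c x d) (s : V) :
    SReach src tgt s (restrictS s c + x s • betaS src tgt s) (restrictS s d) := by
  induction h with
  | refl c => simpa using .refl
  | @head c x d v hv _ ih =>
    obtain rfl | hvs := eq_or_ne v s
    · rw [restrictS_fire_self] at ih
      rwa [Pi.add_apply, Pi.single_eq_same, succ_nsmul', ← add_assoc]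
    · have hmove : SFireStep src tgt s (restrictS s c) (restrictS s (fire src tgt c v)) :=
        ⟨⟨v, hvs⟩, hv, restrictS_fire_coe c ⟨v, hvs⟩⟩
      rw [Pi.add_apply, Pi.single_eq_of_ne hvs.symm, add_zero]
      exact (SReach.add_right (.single hmove) _).trans ih

theorem SReach.exists_fires (h : SReach src tgt s (restrictS s c) b) :
    ∃ x d, Fires src tgt c x d ∧ x s = 0 ∧ restrictS s d = b := by
  generalize ha : restrictS s c = a at h
  induction h using Relation.ReflTransGen.head_induction_on generalizing c with
  | refl => exact ⟨0, c, .refl c, rfl, ha⟩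
  | head h _ ih =>
    obtain ⟨v, hv, rfl⟩ := h
    subst ha
    obtain ⟨x, d, hd, hx, rfl⟩ := ih (restrictS_fire_coe c v)
    exact ⟨_, d, hd.head hv, by simp [hx, v.2.symm], rfl⟩

theorem Fires.eq_of_sstable (h : Fires src tgt c x d) (hx : x s = 0)
    (hc : SStable src s (restrictS s c)) : d = c := by
  cases h with
  | refl => rfl
  | @head _ _ _ v hv =>
    have hvs : v ≠ s := by
      rintro rfl
      simp at hx
    exact absurd hv (hc ⟨v, hvs⟩).not_ge

/-- Legal firing sequences that avoid a global sink cannot be closed, so they well-order the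
finitely many configurations of each level. -/
theorem isStrictOrder_fires_avoiding (hs : ∀ v, HasPath src tgt v s) :
    IsStrictOrder (V → ℕ) fun d c => ∃ x ≠ 0, x s = 0 ∧ Fires src tgt c x d where
  irrefl := by
    rintro c ⟨x, hx, hxs, h⟩
    obtain ⟨v, hv⟩ := Function.ne_iff.1 hx
    exact (h.pos_of_closed (Nat.pos_of_ne_zero hv) (hs v)).ne' hxs
  trans := by
    rintro e d c ⟨y, hy, hys, hde⟩ ⟨x, _, hxs, hcd⟩
    exact ⟨x + y, fun h0 => hy (add_eq_zero.1 h0).2, by simp [hxs, hys], hcd.trans hde⟩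

variable [Finite V]

theorem exists_fires_sstable (hs : ∀ v, HasPath src tgt v s) (c : V → ℕ) :
    ∃ x d, Fires src tgt c x d ∧ x s = 0 ∧ SStable src s (restrictS s d) := by
  cases nonempty_fintype V
  have := isStrictOrder_fires_avoiding hs
  refine (finite_setOf_lvl_eq (lvl c)).wellFoundedOn.induction
    (r := fun d c => ∃ x ≠ 0, x s = 0 ∧ Fires src tgt c x d)
    (P := fun e => ∃ x d, Fires src tgt e x d ∧ x s = 0 ∧ SStable src s (restrictS s d))
    rfl fun e he ih => ?_
  by_cases hst : SStable src s (restrictS s e)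
  · exact ⟨0, e, .refl e, rfl, hst⟩
  obtain ⟨v, hv⟩ : ∃ v : {v // v ≠ s}, outdeg src v.1 ≤ restrictS s e v := by
    simpa only [SStable, not_forall, not_lt] using hst
  obtain ⟨x, d, hd, hxs, hstable⟩ := ih (fire src tgt e v) ((lvl_fire hv).trans he)
    ⟨Pi.single v.1 1, by simp, by simp [v.2.symm], .single hv⟩
  exact ⟨_, d, hd.head hv, by simp [hxs, v.2.symm], hstable⟩

theorem exists_sreach_sstable (hs : ∀ v, HasPath src tgt v s) (a : {v : V // v ≠ s} → ℕ) :
    ∃ b, SReach src tgt s a b ∧ SStable src s b := by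
  obtain ⟨x, d, hd, hxs, hst⟩ := exists_fires_sstable hs (extendS s a)
  have h := hd.sreach s
  rw [hxs, zero_smul, add_zero, restrictS_extendS] at h
  exact ⟨_, h, hst⟩

theorem sreach_stab (hs : ∀ v, HasPath src tgt v s) (a : {v : V // v ≠ s} → ℕ) :
    SReach src tgt s a (stab src tgt s a) :=
  (Classical.epsilon_spec (exists_sreach_sstable hs a)).1

theorem sstable_stab (hs : ∀ v, HasPath src tgt v s) (a : {v : V // v ≠ s} → ℕ) :
    SStable src s (stab src tgt s a) :=
  (Classical.epsilon_spec (exists_sreach_sstable hs a)).2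

omit [Finite V] in
theorem SReach.eq_of_sstable {b' : {v : V // v ≠ s} → ℕ} (h : SReach src tgt s a b)
    (hb : SStable src s b) (h' : SReach src tgt s a b') (hb' : SStable src s b') : b = b' := by
  rw [← restrictS_extendS a] at h h'
  obtain ⟨x, d, hd, hx, rfl⟩ := h.exists_fires
  obtain ⟨y, e, he, hy, rfl⟩ := h'.exists_fires
  obtain ⟨f, hdf, hef⟩ := he.exists_completion hd
  rw [← hdf.eq_of_sstable (by simp [hy]) hb, ← hef.eq_of_sstable (by simp [hx]) hb']

theorem stab_eq (hs : ∀ v, HasPath src tgt v s) (h : SReach src tgt s a b)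
    (hb : SStable src s b) : stab src tgt s a = b :=
  (sreach_stab hs a).eq_of_sstable (sstable_stab hs a) h hb

theorem SReach.stab_eq_stab (hs : ∀ v, HasPath src tgt v s) (h : SReach src tgt s a b) :
    stab src tgt s a = stab src tgt s b :=
  stab_eq hs (h.trans (sreach_stab hs b)) (sstable_stab hs b)

theorem stab_stab_add (hs : ∀ v, HasPath src tgt v s) (a b : {v : V // v ≠ s} → ℕ) :
    stab src tgt s (stab src tgt s a + b) = stab src tgt s (a + b) :=
  (((sreach_stab hs a).add_right b).stab_eq_stab hs).symm

end Stabilization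

/-! ### `s`-recurrent configurations -/

section SRecurrence

omit [Fintype V] [DecidableEq E]

variable {src tgt : E → V} {s v : V} {c : V → ℕ} {a : {v : V // v ≠ s} → ℕ}

theorem exists_fires_one_le (h : HasPath src tgt s v) :
    ∃ (k : ℕ) (x d : V → ℕ), Fires src tgt (k • deltaS s) x d ∧ 1 ≤ d v := by
  induction h with
  | refl => exact ⟨1, 0, _, .refl _, by simp [deltaS]⟩
  | @tail u w _ huw ih =>
    obtain ⟨k, x, d, h, hd⟩ := ih
    obtain rfl | hwu := eq_or_ne w u
    · exact ⟨k, x, d, h, hd⟩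
    have hu : outdeg src u ≤ (outdeg src u • d) u := Nat.le_mul_of_pos_right _ hd
    have h' := (h.smul (outdeg src u)).trans (.single hu)
    rw [smul_smul] at h'
    refine ⟨_, _, _, h', ?_⟩
    rw [fire_apply_of_ne hwu]
    exact (numEdges_pos huw).trans_le le_add_self

variable [Finite V]

theorem exists_fires_ge (hs : ∀ v, HasPath src tgt s v) (c : V → ℕ) :
    ∃ (k : ℕ) (x d : V → ℕ), Fires src tgt (k • deltaS s) x d ∧ c ≤ d := by
  cases nonempty_fintype V
  choose k x d h hd using fun v => exists_fires_one_le (hs v)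
  have hsum := Fires.sum univ fun v _ => (h v).smul (c v)
  simp only [smul_smul, ← sum_smul] at hsum
  refine ⟨_, _, _, hsum, fun w => ?_⟩
  calc c w ≤ c w * d w w := Nat.le_mul_of_pos_right _ (hd w)
    _ ≤ ∑ v, c v * d v w :=
      single_le_sum (f := fun v => c v * d v w) (fun _ _ => Nat.zero_le _) (mem_univ w)
    _ = (∑ v, c v • d v) w := by simp

theorem exists_sreach_ge (hs : ∀ v, HasPath src tgt s v) (a : {v : V // v ≠ s} → ℕ) :
    ∃ (k : ℕ) (d : {v : V // v ≠ s} → ℕ), SReach src tgt s (k • betaS src tgt s) d ∧ a ≤ d := by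
  obtain ⟨k, x, d, h, hd⟩ := exists_fires_ge hs (extendS s a)
  have hreach := h.sreach s
  rw [restrictS_smul, restrictS_deltaS, smul_zero, zero_add] at hreach
  refine ⟨x s, restrictS s d, hreach, ?_⟩
  rw [← restrictS_extendS a]
  exact fun v => hd v

theorem Recurrent.srecurrent_stab (hG : StronglyConnected src tgt) (hc : Recurrent src tgt c)
    (s : V) : SRecurrent src tgt s (stab src tgt s (restrictS s c)) := by
  intro a
  obtain ⟨k, d, hd, had⟩ := exists_sreach_ge (hG s) a
  obtain ⟨d', rfl⟩ := exists_add_of_le had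
  obtain ⟨z, hz, hcz⟩ := hc.exists_closed_ge hG fun _ => k
  obtain ⟨j, hj⟩ := exists_add_of_le (hz s)
  refine ⟨d' + (restrictS s c + j • betaS src tgt s), ?_⟩
  calc stab src tgt s (a + (d' + (restrictS s c + j • betaS src tgt s)))
      = stab src tgt s (k • betaS src tgt s + (restrictS s c + j • betaS src tgt s)) := by
        rw [← add_assoc]
        exact ((hd.add_right _).stab_eq_stab (hG · s)).symm
    _ = stab src tgt s (restrictS s c + z s • betaS src tgt s) := by
        rw [hj, add_smul, add_left_comm]
    _ = stab src tgt s (restrictS s c) := (hcz.sreach s).stab_eq_stab (hG · s)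

theorem SRecurrent.sstable (hs : ∀ v, HasPath src tgt v s) (ha : SRecurrent src tgt s a) :
    SStable src s a := by
  obtain ⟨b, rfl⟩ := ha 0
  exact sstable_stab hs _

theorem SRecurrent.stab_eq_self (hs : ∀ v, HasPath src tgt v s) (ha : SRecurrent src tgt s a) :
    stab src tgt s a = a :=
  stab_eq hs .refl (ha.sstable hs)

theorem finite_setOf_sstable (src : E → V) (s : V) : {a | SStable src s a}.Finite :=
  Set.Finite.pi' fun _ => Set.finite_Iio _

theorem finite_recS (hs : ∀ v, HasPath src tgt v s) : Finite (RecS src tgt s) :=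
  ((finite_setOf_sstable src s).subset fun _ ha => SRecurrent.sstable hs ha).to_subtype

theorem SRecurrent.exists_period (hs : ∀ v, HasPath src tgt v s) (ha : SRecurrent src tgt s a)
    (b : {v : V // v ≠ s} → ℕ) : ∃ q > 0, stab src tgt s (a + q • b) = a := by
  have := (finite_setOf_sstable src s).to_subtype
  let f (n : ℕ) (d : {d | SStable src s d}) : {d | SStable src s d} :=
    ⟨stab src tgt s (d + n • b), sstable_stab hs _⟩
  obtain ⟨i, j, hij, hf⟩ :=
    Set.finite_univ.exists_lt_map_eq_of_forall_mem fun n => Set.mem_univ (f n)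
  obtain ⟨q, rfl⟩ := exists_add_of_le hij.le
  obtain ⟨e, rfl⟩ := ha (i • b)
  refine ⟨q, by omega, ?_⟩
  have heq := congrArg Subtype.val (congrFun hf ⟨stab src tgt s e, sstable_stab hs e⟩)
  simp only [f, stab_stab_add hs] at heq
  rw [stab_stab_add hs, add_comm (i • b), heq, add_smul, add_assoc]

end SRecurrence

/-! ### Comparing the two notions of recurrence -/

section Comparison

omit [Fintype V] [DecidableEq E]

variable {src tgt : E → V} {s : V} {c d : V → ℕ} {a b : {v : V // v ≠ s} → ℕ}

theorem restrictS_phi (src tgt : E → V) (a : {v : V // v ≠ s} → ℕ) :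
    restrictS s (phi src tgt s a) = a :=
  restrictS_extendS_add a _

variable [Finite V]

theorem SRecurrent.exists_recurrent_extendS (hG : StronglyConnected src tgt)
    (ha : SRecurrent src tgt s a) :
    ∃ k : ℕ, Recurrent src tgt (extendS s a + k • deltaS s) := by
  cases nonempty_fintype V
  obtain ⟨q, hq, hperiod⟩ := ha.exists_period (hG · s) (betaS src tgt s)
  refine ⟨q * outdeg src s, (recurrent_iff_exists_closed hG).2 ?_⟩
  have hlegal : outdeg src s ≤ (outdeg src s • deltaS s) s := by simp [deltaS]
  have hfire := ((Fires.single (tgt := tgt) hlegal).smul q).add_right (extendS s a)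
  rw [smul_smul, add_comm _ (extendS s a)] at hfire
  set d := q • fire src tgt (outdeg src s • deltaS s) s + extendS s a
  have hd : SReach src tgt s (restrictS s d) a := by
    have hstab := sreach_stab (hG · s) (a + q • betaS src tgt s)
    rw [hperiod] at hstab
    rwa [restrictS_add, restrictS_smul, restrictS_fire_self, restrictS_smul, restrictS_deltaS,
      restrictS_extendS, smul_zero, zero_add, add_comm]
  obtain ⟨x, e, he, hxs, hea⟩ := hd.exists_fires
  have hclosed := hfire.trans he
  have hec : e = extendS s a + (q * outdeg src s) • deltaS s :=
    eq_of_restrictS_eq_of_lvl_eq (hea.trans (restrictS_extendS_add a _).symm) hclosed.lvl_eq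
  rw [hec] at hclosed
  refine ⟨_, fun h0 => ?_, hclosed⟩
  simpa [hxs, hq.ne'] using congrFun h0 s

theorem SRecurrent.recurrent_extendS_iff (hG : StronglyConnected src tgt)
    (ha : SRecurrent src tgt s a) (k : ℕ) :
    Recurrent src tgt (extendS s a + k • deltaS s) ↔ sIndex src tgt s a ≤ k := by
  refine ⟨fun h => Nat.sInf_le h, fun h => ?_⟩
  obtain ⟨j, rfl⟩ := exists_add_of_le h
  have hmin : Recurrent src tgt (extendS s a + sIndex src tgt s a • deltaS s) :=
    Nat.sInf_mem (ha.exists_recurrent_extendS hG)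
  rw [add_smul, ← add_assoc]
  exact hmin.add_right hG _

theorem SRecurrent.recurrent_phi (hG : StronglyConnected src tgt)
    (ha : SRecurrent src tgt s a) : Recurrent src tgt (phi src tgt s a) :=
  (ha.recurrent_extendS_iff hG _).2 le_rfl

theorem Reach.sequiv (hs : ∀ v, HasPath src tgt v s) (h : Reach src tgt c d) :
    SEquiv src tgt s (stab src tgt s (restrictS s c)) (stab src tgt s (restrictS s d)) := by
  obtain ⟨x, hx⟩ := h.exists_fires
  refine ⟨x s, ?_⟩
  rw [stab_stab_add hs]
  exact (hx.sreach s).stab_eq_stab hs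

theorem Recurrent.exists_reach_of_sequiv (hG : StronglyConnected src tgt)
    (hc : Recurrent src tgt c) (h : SEquiv src tgt s (stab src tgt s (restrictS s c)) b) :
    ∃ d, Reach src tgt c d ∧ restrictS s d = b := by
  obtain ⟨k, rfl⟩ := h
  obtain ⟨z, hz, hcz⟩ := hc.exists_closed_ge hG fun _ => k
  obtain ⟨x, d, hx, rfl⟩ := hcz.exists_apply_eq s k (hz s)
  obtain ⟨y, e, hy, -, he⟩ := (sreach_stab (hG · s) (restrictS s d)).exists_fires
  refine ⟨e, (hx.trans hy).reach, ?_⟩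
  rw [he, stab_stab_add (hG · s), (hx.sreach s).stab_eq_stab (hG · s)]

theorem sequiv_equivalence (hG : StronglyConnected src tgt) :
    Equivalence fun a b : RecS src tgt s => SEquiv src tgt s a.1 b.1 where
  refl a := ⟨0, by rw [zero_smul, add_zero, a.2.stab_eq_self (hG · s)]⟩
  symm {a b} h := by
    have hphi := a.2.recurrent_phi hG
    obtain ⟨d, hd, hdb⟩ := hphi.exists_reach_of_sequiv (s := s) (b := b.1) hG <| by
      rwa [restrictS_phi, a.2.stab_eq_self (hG · s)]
    have hba := (hphi.2 d hd).sequiv (hG · s)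
    rwa [hdb, restrictS_phi, a.2.stab_eq_self (hG · s), b.2.stab_eq_self (hG · s)] at hba
  trans := by
    rintro _ _ _ ⟨k, hk⟩ ⟨m, hm⟩
    exact ⟨k + m, by rw [← hm, ← hk, stab_stab_add (hG · s), add_smul, add_assoc]⟩

theorem recSSetoid_iff (hG : StronglyConnected src tgt) {a b : RecS src tgt s} :
    recSSetoid src tgt s a b ↔ SEquiv src tgt s a.1 b.1 :=
  (sequiv_equivalence hG).eqvGen_iff

end Comparison

/-! ### Classes of a given level -/

section Classes

omit [DecidableEq E]

variable {src tgt : E → V} {s : V} {c d : V → ℕ}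

theorem Recurrent.reach_iff (hG : StronglyConnected src tgt) (hc : Recurrent src tgt c)
    (hd : Recurrent src tgt d) :
    Reach src tgt c d ↔ lvl c = lvl d ∧
      SEquiv src tgt s (stab src tgt s (restrictS s c)) (stab src tgt s (restrictS s d)) := by
  refine ⟨fun h => ⟨h.lvl_eq.symm, h.sequiv (hG · s)⟩, fun ⟨hlvl, h⟩ => ?_⟩
  obtain ⟨c', hcc', hc'⟩ := hc.exists_reach_of_sequiv hG h
  obtain ⟨x, d', hdd', -, hd'⟩ := (sreach_stab (hG · s) (restrictS s d)).exists_fires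
  have hcd' : c' = d' := eq_of_restrictS_eq_of_lvl_eq (hc'.trans hd'.symm) <| by
    rw [hcc'.lvl_eq, hlvl, hdd'.lvl_eq]
  exact hcc'.trans (hcd' ▸ hd.2 _ hdd'.reach)

theorem lvl_phi (src tgt : E → V) (a : {v : V // v ≠ s} → ℕ) :
    lvl (phi src tgt s a) = slvl src tgt s a :=
  lvl_extendS_add a _

theorem Recurrent.slvl_stab_le (hG : StronglyConnected src tgt) (hc : Recurrent src tgt c)
    (s : V) : slvl src tgt s (stab src tgt s (restrictS s c)) ≤ lvl c := by
  obtain ⟨x, d, hcd, -, hd⟩ := (sreach_stab (hG · s) (restrictS s c)).exists_fires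
  have hrec : Recurrent src tgt (extendS s (restrictS s d) + d s • deltaS s) := by
    rw [extendS_restrictS_add]
    exact hc.of_reach hcd.reach
  rw [← hd, ← hcd.lvl_eq, lvl_eq_add_sum_restrictS s d]
  exact Nat.add_le_add_right (Nat.sInf_le hrec) _

theorem SEquiv.slvl_le (hG : StronglyConnected src tgt) {a b : RecS src tgt s}
    (h : SEquiv src tgt s a.1 b.1) : slvl src tgt s b.1 ≤ slvl src tgt s a.1 := by
  have hphi := a.2.recurrent_phi hG
  obtain ⟨d, hd, hdb⟩ := hphi.exists_reach_of_sequiv (s := s) (b := b.1) hG <| by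
    rwa [restrictS_phi, a.2.stab_eq_self (hG · s)]
  calc slvl src tgt s b.1 = slvl src tgt s (stab src tgt s (restrictS s d)) := by
        rw [hdb, b.2.stab_eq_self (hG · s)]
    _ ≤ lvl d := (hphi.of_reach hd).slvl_stab_le hG s
    _ = slvl src tgt s a.1 := by rw [hd.lvl_eq, lvl_phi]

theorem lvlClass_mk (c : RecL src tgt) : lvlClass src tgt (Quotient.mk _ c) = lvl c.1 :=
  csSup_image_mk_eq _ (fun _ _ h => (recLSetoid_iff.1 h).lvl_eq.symm) c

theorem slvlClass_mk (hG : StronglyConnected src tgt) (a : RecS src tgt s) :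
    slvlClass src tgt s (Quotient.mk _ a) = slvl src tgt s a.1 := by
  refine csSup_image_mk_eq _ (fun a b h => ?_) a
  have hab := (recSSetoid_iff hG).1 h
  exact le_antisymm (((sequiv_equivalence hG).symm hab).slvl_le hG) (hab.slvl_le hG)

/-- The map sending the `~`-class of a recurrent configuration `c` to the `~_s`-class of the
stabilization of its restriction to `V ∖ {s}`. -/
noncomputable def sClass (hG : StronglyConnected src tgt) (s : V) :
    RecLQuot src tgt → RecSQuot src tgt s :=
  Quotient.map (fun c => ⟨stab src tgt s (restrictS s c.1), c.2.srecurrent_stab hG s⟩)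
    fun _ _ h => (recSSetoid_iff hG).2 ((recLSetoid_iff.1 h).sequiv (hG · s))

theorem slvlClass_sClass_le (hG : StronglyConnected src tgt) (s : V) (q : RecLQuot src tgt) :
    slvlClass src tgt s (sClass hG s q) ≤ lvlClass src tgt q := by
  induction q using Quotient.ind with | _ c
  rw [sClass, Quotient.map_mk, slvlClass_mk hG, lvlClass_mk]
  exact c.2.slvl_stab_le hG s

theorem sClass_injOn (hG : StronglyConnected src tgt) (s : V) (n : ℕ) :
    Set.InjOn (sClass hG s) {q | lvlClass src tgt q = n} := by
  intro p hp q hq hpq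
  induction p using Quotient.ind with | _ c
  induction q using Quotient.ind with | _ d
  rw [Set.mem_ofPred_eq, lvlClass_mk] at hp hq
  exact Quotient.sound (recLSetoid_iff.2 ((c.2.reach_iff hG d.2).2
    ⟨hp.trans hq.symm, (recSSetoid_iff hG).1 (Quotient.exact hpq)⟩))

theorem sClass_surjOn (hG : StronglyConnected src tgt) (s : V) (n : ℕ) :
    Set.SurjOn (sClass hG s) {q | lvlClass src tgt q = n} {q | slvlClass src tgt s q ≤ n} := by
  intro q hq
  induction q using Quotient.ind with | _ a
  rw [Set.mem_ofPred_eq, slvlClass_mk hG, slvl] at hq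
  obtain ⟨k, rfl⟩ : ∃ k, n = k + ∑ v, a.1 v := ⟨n - ∑ v, a.1 v, by omega⟩
  refine ⟨Quotient.mk _ ⟨extendS s a.1 + k • deltaS s,
    (a.2.recurrent_extendS_iff hG k).2 (by omega)⟩, ?_, ?_⟩
  · rw [Set.mem_ofPred_eq, lvlClass_mk, lvl_extendS_add]
  · refine congrArg (Quotient.mk _) (Subtype.ext ?_)
    dsimp only
    rw [restrictS_extendS_add, a.2.stab_eq_self (hG · s)]

theorem sClass_bijOn (hG : StronglyConnected src tgt) (s : V) (n : ℕ) :
    Set.BijOn (sClass hG s) {q | lvlClass src tgt q = n} {q | slvlClass src tgt s q ≤ n} :=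
  ⟨fun q hq => (slvlClass_sClass_le hG s q).trans_eq hq, sClass_injOn hG s n,
    sClass_surjOn hG s n⟩

theorem natCard_lvlClass_eq_sum (hG : StronglyConnected src tgt) (s : V) (n : ℕ) :
    Nat.card {q : RecLQuot src tgt // lvlClass src tgt q = n} =
      ∑ m ∈ range (n + 1), Nat.card {q : RecSQuot src tgt s // slvlClass src tgt s q = m} := by
  have := finite_recS (hG · s)
  rw [← natCard_subtype_le_eq_sum]
  exact Nat.card_congr ((sClass_bijOn hG s n).equiv _)

theorem one_sub_X_mul_rcSeries (hG : StronglyConnected src tgt) (s : V) :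
    (1 - PowerSeries.X) * RcSeries src tgt = PcSeries src tgt s := by
  simp only [RcSeries, PcSeries, natCard_lvlClass_eq_sum hG s, Nat.cast_sum]
  exact one_sub_X_mul_mk_sum_range _

end Classes

/-- `(1 − y)·Σ_n |Rec_n(G,~)| yⁿ = Σ_n |Rec_n(G,~_s)| yⁿ` in `ℤ[[y]]`;
equivalently `|Rec_n(G,~)| = Σ_{m=0}^n |Rec_m(G,~_s)|` for all `n`; in particular
`Pc(G,s;y)` does not depend on the choice of `s`. -/
theorem rcSeries_eq_pcSeries [Nonempty V] (src tgt : E → V)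
    (hG : StronglyConnected src tgt) (s : V) :
    (1 - PowerSeries.X) * RcSeries src tgt = PcSeries src tgt s ∧
    (∀ n : ℕ, Nat.card {q : RecLQuot src tgt // lvlClass src tgt q = n} =
      ∑ m ∈ Finset.range (n + 1),
        Nat.card {q : RecSQuot src tgt s // slvlClass src tgt s q = m}) ∧
    (∀ s' : V, PcSeries src tgt s = PcSeries src tgt s') :=
  ⟨one_sub_X_mul_rcSeries hG s, natCard_lvlClass_eq_sum hG s, fun s' =>
    (one_sub_X_mul_rcSeries hG s).symm.trans (one_sub_X_mul_rcSeries hG s')⟩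

end SandpileBM
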